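/- Let r₁ < ⋯ < r_l be real numbers with r_j irrational for j ≥ 2 and all pairwise differences r_i − r_j irrational, and let Q₁, …, Q_l be trigonometric polynomials. If the function G(w) = Σ_{k=1}^l e^{−2πi r_k w} Q_k(w) vanishes at w = x₀ + I for infinitely many integers I (for some fixed real x₀), then Q_k(x₀) = 0 for every k. -/

import Mathlib

/-!
By periodicity `Q k (x₀ + I) = Q k x₀` for integers `I`, so the hypothesis says that the exponential
sum `∑ c k * z k ^ I`, with `z k = exp (-2πi r k)` and `c k = exp (-2πi r k x₀) * Q k x₀`, vanishes
for infinitely many integers `I`. As the differences `r i - r j` are irrational, no quotient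
`z i / z j` with `i ≠ j` is a root of unity. The claim is therefore the Skolem-Mahler-Lech theorem
for nondegenerate sequences with simple characteristic roots (`skolem_mahler_lech`). Mathlib does
not contain it, and it is proved here in two parts.

* `padic_skolem`: the statement over a finite extension of `ℚ_[p]`, for `z k` of norm one. By
  compactness some `z k ^ N` are all close to `1`, hence of the form `exp (t k)`. On a residue class
  modulo `N` the sequence is then interpolated by the `p`-adic analytic function
  `x ↦ ∑ c k * z k ^ a * exp (x * t k)`. Infinitely many integer zeros accumulate in `ℤ_[p]`, so this
  function vanishes on a `p`-adic ball, hence along an arithmetic progression, and the Vandermonde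
  determinant gives `c = 0`.
* `exists_integral_embedding`: a finitely generated domain of characteristic zero embeds in an
  algebraic closure of `ℚ_[p]`, for some prime `p`, with generators integral over `ℤ_[p]`. Adding the
  inverses of the `z k` to the generators makes the images of the `z k` have norm one. A finite
  transcendence basis is sent to algebraically independent `p`-adic integers at which a common
  denominator of the generators is a unit (`exists_prime_point`).
-/

/-! ### Exponential sums over `p`-adic fields -/

section Padic

open Filter Topology NormedSpace

/-- Legendre's formula bounds the `p`-adic valuation of `n!` by `n`. -/
theorem padic_norm_inv_factorial_le (p : ℕ) [hp : Fact p.Prime] (n : ℕ) :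
    ‖((n.factorial : ℚ_[p]))⁻¹‖ ≤ (p : ℝ) ^ n := by
  have hp1 : (1 : ℝ) ≤ p := by exact_mod_cast hp.out.one_lt.le
  have hv : padicValNat p n.factorial ≤ n := by
    have h := sub_one_mul_padicValNat_factorial (p := p) n
    have h2 : 1 ≤ p - 1 := by have := hp.out.two_le; omega
    calc padicValNat p n.factorial ≤ (p - 1) * padicValNat p n.factorial :=
          Nat.le_mul_of_pos_left _ h2
      _ ≤ n := by rw [h]; omega
  have h0 : (n.factorial : ℚ_[p]) ≠ 0 := by exact_mod_cast n.factorial_ne_zero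
  rw [norm_inv, Padic.norm_eq_zpow_neg_valuation h0, Padic.valuation_natCast, zpow_neg, inv_inv,
    zpow_natCast]
  exact pow_le_pow_right₀ hp1 hv

theorem padic_expSeries_radius_pos {p : ℕ} [hp : Fact p.Prime]
    {L : Type*} [NormedField L] [NormedAlgebra ℚ_[p] L] : 0 < (expSeries ℚ_[p] L).radius := by
  have hp0 : (0 : ℝ) < p := by exact_mod_cast hp.out.pos
  refine lt_of_lt_of_le ?_ ((expSeries ℚ_[p] L).le_radius_of_bound (r := (p : NNReal)⁻¹) 1
    fun n => ?_)
  · simp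
  · have h1 : ‖expSeries ℚ_[p] L n‖ ≤ (p : ℝ) ^ n := by
      rw [expSeries, norm_smul]
      calc _ ≤ (p : ℝ) ^ n * 1 := by
            gcongr
            · exact padic_norm_inv_factorial_le p n
            · simp
        _ = _ := mul_one _
    calc _ ≤ (p : ℝ) ^ n * ((p : ℝ)⁻¹) ^ n := by
          push_cast; gcongr
      _ = 1 := by rw [← mul_pow, mul_inv_cancel₀ hp0.ne', one_pow]

theorem exp_intCast_mul {p : ℕ} [hp : Fact p.Prime]
    {L : Type*} [NormedField L] [NormedAlgebra ℚ_[p] L] [CompleteSpace L] {t : L}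
    (ht : t ∈ Metric.eball (0 : L) (expSeries ℚ_[p] L).radius) (m : ℤ) :
    exp ((m : ℚ_[p]) • t) = exp t ^ m := by
  have hball : ∀ k : ℤ, (k : ℚ_[p]) • t ∈ Metric.eball (0 : L) (expSeries ℚ_[p] L).radius := by
    intro k
    rw [Metric.mem_eball, edist_zero_right] at ht ⊢
    refine lt_of_le_of_lt ?_ ht
    rw [enorm_smul]
    have : ‖(k : ℚ_[p])‖ₑ ≤ 1 := by
      rw [← ofReal_norm]
      exact ENNReal.ofReal_le_one.2 (Padic.norm_int_le_one k)
    exact mul_le_of_le_one_left' this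
  have hneg : exp (-t) = (exp t)⁻¹ := exp_neg_of_mem_ball ℚ_[p] ht
  have ht0 : exp t ≠ 0 := (isUnit_exp_of_mem_ball (𝕂 := ℚ_[p]) ht).ne_zero
  induction m using Int.induction_on with
  | zero => simp
  | succ i ih =>
    rw [zpow_add_one₀ ht0, ← ih, ← exp_add_of_mem_ball (𝕂 := ℚ_[p]) (hball _) ht]
    push_cast; rw [add_smul, one_smul]
  | pred i ih =>
    have hnt : -t ∈ Metric.eball (0 : L) (expSeries ℚ_[p] L).radius := by
      simpa using hball (-1)
    rw [zpow_sub_one₀ ht0, ← ih, ← hneg, ← exp_add_of_mem_ball (𝕂 := ℚ_[p]) (hball _) hnt]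
    push_cast; rw [sub_smul, one_smul, sub_eq_add_neg]

/-- Dirichlet-type simultaneous approximation: the powers of a tuple of norm-one elements accumulate
by compactness, and quotients of nearby powers are close to `1`. -/
theorem exists_pow_mem_nhds {L : Type*} [NormedField L] [ProperSpace L] {ι : Type*} [Finite ι] (z : ι → L)
    (hz : ∀ k, ‖z k‖ = 1) {U : Set L} (hU : U ∈ 𝓝 (1 : L)) :
    ∃ N : ℕ, 0 < N ∧ ∀ k, z k ^ N ∈ U := by
  have hc : IsCompact (Set.univ.pi fun _ : ι => Metric.sphere (0 : L) 1) :=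
    isCompact_univ_pi fun _ => isCompact_sphere _ _
  obtain ⟨b, hb, φ, hφ, hlim⟩ := hc.tendsto_subseq (x := fun n k => z k ^ n)
    (fun n k _ => by simp [hz])
  have hb0 : ∀ k, b k ≠ 0 := fun k h => by
    have := hb k trivial
    simp [h] at this
  rw [tendsto_pi_nhds] at hlim
  have h1 : ∀ k, ∀ᶠ n in atTop, z k ^ (φ (n + 1) - φ n) ∈ U := fun k => by
    have h2 : Tendsto (fun n => z k ^ φ (n + 1) / z k ^ φ n) atTop (𝓝 (b k / b k)) :=
      Tendsto.div ((hlim k).comp (tendsto_add_atTop_nat 1)) (hlim k) (hb0 k)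
    rw [div_self (hb0 k)] at h2
    filter_upwards [h2.eventually_mem hU] with n hn
    rwa [pow_sub₀ _ (fun h => by have := hz k; simp [h] at this) (hφ (Nat.lt_succ_self n)).le,
      ← div_eq_mul_inv]
  obtain ⟨n, hn⟩ := (eventually_all.2 h1).exists
  exact ⟨_, Nat.sub_pos_of_lt (hφ (Nat.lt_succ_self n)), hn⟩

/-- Some common power of norm-one elements has a logarithm in the disk of convergence of the
exponential: by the inverse function theorem `exp` covers a neighbourhood of `1`. -/
theorem exists_log_pow (p : ℕ) [hp : Fact p.Prime]
    {L : Type*} [NormedField L] [NormedAlgebra ℚ_[p] L] [ProperSpace L] {ι : Type*} [Finite ι] (z : ι → L)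
    (hz : ∀ k, ‖z k‖ = 1) :
    ∃ N : ℕ, 0 < N ∧ ∃ t : ι → L,
      ∀ k, t k ∈ Metric.eball (0 : L) (expSeries ℚ_[p] L).radius ∧ exp (t k) = z k ^ N := by
  have hr := padic_expSeries_radius_pos (p := p) (L := L)
  have hmap : map (exp : L → L) (𝓝 0) = 𝓝 1 := by
    have h := (hasStrictFDerivAt_exp_zero_of_radius_pos (𝕂 := ℚ_[p]) (𝔸 := L) hr)
    have h' : HasStrictFDerivAt (exp : L → L)
      ((ContinuousLinearEquiv.refl ℚ_[p] L : L ≃L[ℚ_[p]] L) : L →L[ℚ_[p]] L) 0 := h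
    simpa using h'.map_nhds_eq_of_equiv
  obtain ⟨N, hN, h⟩ := exists_pow_mem_nhds z hz
    (hmap ▸ image_mem_map (Metric.eball_mem_nhds (0 : L) hr))
  choose t ht using h
  exact ⟨N, hN, t, ht⟩

/-- Skolem's theorem for locally compact `p`-adic fields: a nonzero exponential sum whose bases have
norm one and quotients that are not roots of unity has only finitely many integer zeros. -/
theorem padic_skolem (p : ℕ) [hp : Fact p.Prime]
    {L : Type*} [NormedField L] [NormedAlgebra ℚ_[p] L] [ProperSpace L] {l : ℕ} (z c : Fin l → L) (hz : ∀ k, ‖z k‖ = 1)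
    (hroot : ∀ i j, i ≠ j → ∀ n : ℕ, 0 < n → z i ^ n ≠ z j ^ n)
    (hS : {m : ℤ | ∑ k, c k * z k ^ m = 0}.Infinite) : c = 0 := by
  have hz0 : ∀ k, z k ≠ 0 := fun k h => by have := hz k; simp [h] at this
  obtain ⟨N, hN, t, ht⟩ := exists_log_pow p z hz
  -- Some residue class modulo `N` contains infinitely many zeros.
  obtain ⟨a, ha⟩ : ∃ a : ℤ, {m : ℤ | ∑ k, c k * z k ^ (a + N * m) = 0}.Infinite := by
    by_contra! hcon
    refine hS (Set.Finite.subset (Set.Finite.biUnion (Set.finite_Ico (0 : ℤ) N)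
      fun a _ => ((hcon a).image fun m => a + N * m)) fun m hm => ?_)
    simp only [Set.mem_iUnion]
    have hN' : (0 : ℤ) < N := by exact_mod_cast hN
    refine ⟨m % N, ⟨Int.emod_nonneg _ hN'.ne', Int.emod_lt_of_pos _ hN'⟩, m / N, ?_,
      Int.emod_add_mul_ediv m N⟩
    simpa only [Set.mem_ofPred_eq, Int.emod_add_mul_ediv] using hm
  set f : ℚ_[p] → L := fun x => ∑ k, c k * z k ^ a * exp (x • t k) with hf
  have hfint : ∀ m : ℤ, f m = ∑ k, c k * z k ^ (a + N * m) := fun m => by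
    refine Finset.sum_congr rfl fun k _ => ?_
    rw [exp_intCast_mul (ht k).1, (ht k).2, zpow_add₀ (hz0 k), zpow_mul, zpow_natCast, mul_assoc]
  have hinj : Function.Injective ((↑) : ℤ → ℚ_[p]) := Int.cast_injective
  obtain ⟨x₀, hx₀, hacc⟩ := (ha.image hinj.injOn).exists_accPt_of_subset_isCompact
    (isCompact_closedBall (0 : ℚ_[p]) 1) (by
      rintro _ ⟨m, -, rfl⟩
      simpa using Padic.norm_int_le_one (p := p) m)
  -- The exponent `x • t k` stays in the disk of convergence because `‖x₀‖ ≤ 1`.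
  have hfan : AnalyticAt ℚ_[p] f x₀ := by
    refine Finset.analyticAt_fun_sum _ fun k _ => analyticAt_const.mul ?_
    refine AnalyticAt.fun_comp (analyticAt_exp_of_mem_ball _ ?_) (analyticAt_id.smul analyticAt_const)
    have := (ht k).1
    rw [Metric.mem_eball, edist_zero_right] at this ⊢
    refine lt_of_le_of_lt ?_ this
    rw [enorm_smul]
    have : ‖x₀‖ₑ ≤ 1 := by
      rw [← ofReal_norm]
      exact ENNReal.ofReal_le_one.2 (by simpa using hx₀)
    exact mul_le_of_le_one_left' this
  rw [accPt_iff_frequently_nhdsNE] at hacc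
  have hloc : ∀ᶠ x in 𝓝 x₀, f x = 0 := hfan.frequently_zero_iff_eventually_zero.1 <|
    hacc.mono (by rintro _ ⟨m, hm, rfl⟩; rw [hfint]; exact hm)
  -- The ball where `f` vanishes can be recentred at an integer, as integers accumulate at `x₀`.
  obtain ⟨m₀, hm₀⟩ : ∃ m₀ : ℤ, ∀ᶠ x in 𝓝 (m₀ : ℚ_[p]), f x = 0 := by
    obtain ⟨_, ⟨m, -, rfl⟩, h⟩ := (hacc.and_eventually
      (hloc.eventually_nhds.filter_mono nhdsWithin_le_nhds)).exists
    exact ⟨m, h⟩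
  obtain ⟨ε, hε, hball⟩ := Metric.eventually_nhds_iff.1 hm₀
  obtain ⟨s, hs⟩ := exists_pow_lt_of_lt_one hε (show (p : ℝ)⁻¹ < 1 from
    inv_lt_one_of_one_lt₀ (by exact_mod_cast hp.out.one_lt))
  -- The integers `m₀ + p ^ s * n` all lie in that ball.
  have hprog : ∀ n : ℕ, ∑ k, c k * z k ^ (a + N * m₀) * (z k ^ (N * p ^ s)) ^ n = 0 := by
    intro n
    have h0 : f ((m₀ + p ^ s * n : ℤ) : ℚ_[p]) = 0 := by
      refine hball ?_
      push_cast
      rw [dist_eq_norm, add_sub_cancel_left, norm_mul, norm_pow, Padic.norm_p]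
      refine lt_of_le_of_lt (mul_le_of_le_one_right (by positivity) ?_) hs
      exact_mod_cast Padic.norm_int_le_one (p := p) n
    rw [hfint] at h0
    rw [← h0]
    refine Finset.sum_congr rfl fun k _ => ?_
    rw [mul_assoc, ← pow_mul, ← zpow_natCast, ← zpow_add₀ (hz0 k)]
    push_cast
    ring_nf
  have hv := Matrix.eq_zero_of_forall_pow_sum_mul_pow_eq_zero
    (f := fun k => z k ^ (N * p ^ s)) (v := fun k => c k * z k ^ (a + N * m₀))
    (fun i j hij => by
      by_contra hne
      exact hroot i j hne _ (Nat.mul_pos hN (pow_pos hp.out.pos s)) hij)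
    (fun i => hprog i)
  funext k
  exact (mul_eq_zero.1 (congrFun hv k)).resolve_right (zpow_ne_zero _ (hz0 k))
end Padic

/-! ### Embedding finitely generated domains in `p`-adic fields -/

section Embedding

open Polynomial

/-- `ℤ_[p]` is uncountable, whereas a ring algebraic over a countable ring is countable; so a
transcendence basis of `ℤ_[p]` over `ℤ` is infinite. -/
theorem exists_algebraicIndependent_padicInt (p : ℕ) [Fact p.Prime] (ι : Type*) [Finite ι] :
    ∃ τ : ι → ℤ_[p], AlgebraicIndependent ℤ τ := by
  obtain ⟨s, hs⟩ := exists_isTranscendenceBasis ℤ ℤ_[p]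
  have hinf : s.Infinite := by
    intro hfin
    have := hs.isAlgebraic
    rw [Subtype.range_coe] at this
    have h1 := Algebra.IsAlgebraic.cardinalMk_le_max (Algebra.adjoin ℤ s) ℤ_[p]
    have h2 := Algebra.lift_cardinalMk_adjoin_le ℤ s
    have h3 : Cardinal.mk s ≤ Cardinal.aleph0 := hfin.countable.le_aleph0
    have h4 : Cardinal.continuum ≤ Cardinal.mk ℤ_[p] := by
      have : IsOpen (Metric.closedBall (0 : ℚ_[p]) 1) :=
        IsUltrametricDist.isOpen_closedBall _ one_ne_zero
      have h := continuum_le_cardinal_of_isOpen ℚ_[p] this ⟨0, by simp⟩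
      refine h.trans (Cardinal.mk_le_of_injective
        (f := fun x => (⟨x.1, mem_closedBall_zero_iff.1 x.2⟩ : ℤ_[p])) fun x y hxy => ?_)
      exact Subtype.ext (congrArg (Subtype.val : ℤ_[p] → ℚ_[p]) hxy)
    simp only [Cardinal.lift_id, Cardinal.mk_int, max_eq_left h3,
      max_self] at h2
    exact absurd (h4.trans (h1.trans (max_le h2 le_rfl))) (not_le.2 Cardinal.aleph0_lt_continuum)
  have := hinf.to_subtype
  obtain ⟨e⟩ : Nonempty (ι ↪ s) := by
    cases nonempty_fintype ι
    exact ⟨(Fintype.equivFin ι).toEmbedding.trans (Fin.valEmbedding.trans (Infinite.natEmbedding s))⟩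
  exact ⟨_, hs.1.comp e e.injective⟩

/-- A nonzero integer polynomial takes a unit value at some algebraically independent tuple of
`p`-adic integers, for a suitable `p`: perturb an integer point `n` with `P n ≠ 0` by `p` times an
algebraically independent tuple, where `p` does not divide `P n`. -/
theorem exists_prime_point {ι : Type*} [Finite ι] (P : MvPolynomial ι ℤ) (hP : P ≠ 0) :
    ∃ (p : ℕ) (_ : Fact p.Prime) (y : ι → ℤ_[p]), AlgebraicIndependent ℤ y ∧
      IsUnit (MvPolynomial.aeval y P) := by
  obtain ⟨n, hn⟩ : ∃ n : ι → ℤ, MvPolynomial.eval n P ≠ 0 := by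
    by_contra! h
    exact hP (MvPolynomial.funext fun x => by simpa using h x)
  obtain ⟨p, hle, hp⟩ := Nat.exists_infinite_primes ((MvPolynomial.eval n P).natAbs + 1)
  have hpF : Fact p.Prime := ⟨hp⟩
  obtain ⟨τ, hτ⟩ := exists_algebraicIndependent_padicInt p ι
  have hp0 : (p : ℤ) ≠ 0 := by exact_mod_cast hp.ne_zero
  refine ⟨p, hpF, fun i => n i + p * τ i, ?_, ?_⟩
  · have h := hτ.polynomial_aeval_of_transcendental (f := fun i => C (p : ℤ) * X + C (n i))
      fun i => Polynomial.transcendental _ (by rw [natDegree_linear hp0]; exact one_ne_zero)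
        (by rw [leadingCoeff_linear hp0]; exact mem_nonZeroDivisors_of_ne_zero hp0)
    convert h using 2 with i
    simp [add_comm]
  · by_contra hu
    -- A nonunit reduces to `0` modulo `p`, but the value reduces to `P n`.
    have hker : PadicInt.toZMod (p := p) (MvPolynomial.aeval (fun i => (n i : ℤ_[p]) + p * τ i) P)
        = 0 := by
      rw [← RingHom.mem_ker, PadicInt.ker_toZMod]
      exact (IsLocalRing.mem_maximalIdeal _).2 hu
    have hred : PadicInt.toZMod (p := p) (MvPolynomial.aeval (fun i => (n i : ℤ_[p]) + p * τ i) P)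
        = ((MvPolynomial.eval n P : ℤ) : ZMod p) := by
      rw [← eq_intCast (Int.castRingHom (ZMod p)), MvPolynomial.aeval_def,
        MvPolynomial.hom_eval₂, ← MvPolynomial.coe_eval₂Hom, MvPolynomial.eval,
        MvPolynomial.coe_eval₂Hom, MvPolynomial.coe_eval₂Hom, MvPolynomial.hom_eval₂]
      congr 1
      · exact RingHom.ext_int _ _
      · funext i; simp
    rw [hred, ZMod.intCast_zmod_eq_zero_iff_dvd, Int.natCast_dvd] at hker
    have := Nat.le_of_dvd (Int.natAbs_pos.2 hn) hker
    omega

/-- The Lech-Cassels embedding theorem, with values in the algebraic closure of `ℚ_[p]` instead of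
`ℚ_[p]` itself, which suffices here and avoids Hensel's lemma. -/
theorem exists_integral_embedding {A : Type*} [CommRing A] [IsDomain A] [CharZero A]
    (T : Set A) (hT : T.Finite) (hTA : Algebra.adjoin ℤ T = ⊤) :
    ∃ (p : ℕ) (_ : Fact p.Prime) (ψ : A →+* AlgebraicClosure ℚ_[p]), Function.Injective ψ ∧
      ∀ x ∈ T, IsIntegral ℤ_[p] (ψ x) := by
  have hfaith : FaithfulSMul ℤ A :=
    (faithfulSMul_iff_algebraMap_injective ℤ A).2 (by simpa using Int.cast_injective)
  have : Algebra.IsAlgebraic (Algebra.adjoin ℤ T) A := by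
    rw [hTA]
    exact ⟨fun x => isAlgebraic_algebraMap (⟨x, trivial⟩ : (⊤ : Subalgebra ℤ A))⟩
  obtain ⟨s, hsT, hs⟩ := exists_isTranscendenceBasis_subset (R := ℤ) T
  have : Finite s := (hT.subset hsT).to_subtype
  set B := Algebra.adjoin ℤ (Set.range ((↑) : s → A)) with hB
  have halg : Algebra.IsAlgebraic B A := hs.isAlgebraic
  obtain ⟨b, hb0, hb⟩ := Algebra.IsAlgebraic.exists_integral_multiples B hT.toFinset
  have e : MvPolynomial s ℤ ≃ₐ[ℤ] B := hs.1.aevalEquiv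
  obtain ⟨p, hp, y, hy, hunit⟩ := exists_prime_point (e.symm b)
    (by simpa using hb0)
  let φ : B →+* ℤ_[p] := ((MvPolynomial.aeval y).comp e.symm.toAlgHom).toRingHom
  have hφinj : Function.Injective φ := fun a b hab =>
    e.symm.injective (algebraicIndependent_iff_injective_aeval.1 hy hab)
  have hφb : IsUnit (φ b) := hunit
  let φ' : B →+* AlgebraicClosure ℚ_[p] := (algebraMap ℤ_[p] (AlgebraicClosure ℚ_[p])).comp φ
  have hZp : Function.Injective (algebraMap ℤ_[p] (AlgebraicClosure ℚ_[p])) := by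
    rw [IsScalarTower.algebraMap_eq ℤ_[p] ℚ_[p] (AlgebraicClosure ℚ_[p])]
    exact (algebraMap ℚ_[p] _).injective.comp (IsFractionRing.injective ℤ_[p] ℚ_[p])
  have hφ'inj : Function.Injective φ' := hZp.comp hφinj
  let _ : Algebra B (AlgebraicClosure ℚ_[p]) := φ'.toAlgebra
  have hBM : Module.IsTorsionFree B (AlgebraicClosure ℚ_[p]) :=
    Module.isTorsionFree_iff_algebraMap_injective.mpr hφ'inj
  have hBA : Module.IsTorsionFree B A :=
    Module.isTorsionFree_iff_algebraMap_injective.mpr Subtype.val_injective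
  -- `A` is algebraic over `B`, so the embedding `φ'` of `B` extends to `A`.
  let ψ : A →ₐ[B] AlgebraicClosure ℚ_[p] := IsAlgClosed.lift
  refine ⟨p, hp, ψ.toRingHom, ?_, fun x hx => ?_⟩
  · -- A nonzero ideal of `A` meets `B` nontrivially, so `ker ψ` vanishes along with `ker φ'`.
    rw [RingHom.injective_iff_ker_eq_bot]
    by_contra hne
    obtain ⟨x, hx, hx0⟩ := Submodule.exists_mem_ne_zero_of_ne_bot hne
    refine Ideal.comap_ne_bot_of_algebraic_mem hx0 hx (halg.isAlgebraic x) ?_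
    refine (Submodule.eq_bot_iff _).2 fun r hr => ?_
    have h1 : ψ (algebraMap B A r) = 0 := hr
    rw [ψ.commutes] at h1
    exact hφ'inj (h1.trans (map_zero φ').symm)
  · -- `b • x` is integral over `B`, and `φ b` is a unit of `ℤ_[p]`.
    have h1 : IsIntegral ℤ_[p] (ψ (b • x)) :=
      (hb x (by simpa using hx)).map_of_comp_eq φ ψ.toRingHom (by
        ext r
        exact (ψ.commutes r).symm)
    have h2 : ψ (b • x) = φ b • ψ x := by
      rw [map_smul, Algebra.smul_def, Algebra.smul_def]; rfl
    rw [h2] at h1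
    obtain ⟨u, hu⟩ := hφb
    have h3 := h1.smul (↑u⁻¹ : ℤ_[p])
    rwa [← hu, smul_smul, Units.inv_mul, one_smul] at h3


end Embedding

/-! ### The theorem of Skolem, Mahler and Lech -/

theorem spectralNorm_le_one_of_isIntegral {p : ℕ} [Fact p.Prime] {L : Type*} [Field L]
    [Algebra ℚ_[p] L] [Algebra ℤ_[p] L] [IsScalarTower ℤ_[p] ℚ_[p] L] {x : L} (hx : IsIntegral ℤ_[p] x) :
    spectralNorm ℚ_[p] L x ≤ 1 := by
  have hx' : IsIntegral ℚ_[p] x := hx.tower_top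
  rw [spectralNorm, spectralValue_le_one_iff (minpoly.monic hx'),
    minpoly.isIntegrallyClosed_eq_field_fractions' ℚ_[p] hx]
  intro n
  rw [Polynomial.coeff_map]
  exact PadicInt.norm_le_one _

/-- The Skolem-Mahler-Lech theorem for nondegenerate exponential sums with constant coefficients. -/
theorem skolem_mahler_lech {F : Type*} [Field F] [CharZero F] {l : ℕ} (z c : Fin l → F)
    (hz : ∀ k, z k ≠ 0) (hroot : ∀ i j, i ≠ j → ∀ n : ℕ, 0 < n → z i ^ n ≠ z j ^ n)
    (hS : {m : ℤ | ∑ k, c k * z k ^ m = 0}.Infinite) : c = 0 := by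
  set T : Set F := Set.range z ∪ Set.range (fun k => (z k)⁻¹) ∪ Set.range c with hT
  have hTfin : T.Finite :=
    ((Set.finite_range _).union (Set.finite_range _)).union (Set.finite_range _)
  set A := Algebra.adjoin ℤ T
  have hmem : ∀ x ∈ T, x ∈ A := fun x hx => Algebra.subset_adjoin hx
  obtain ⟨p, hp, ψ, hψ, hint⟩ := exists_integral_embedding (A := A) (((↑) : A → F) ⁻¹' T)
    (hTfin.preimage Subtype.val_injective.injOn) Algebra.adjoin_adjoin_coe_preimage
  have hzT : ∀ k, z k ∈ T := fun k => .inl (.inl ⟨k, rfl⟩)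
  have hzT' : ∀ k, (z k)⁻¹ ∈ T := fun k => .inl (.inr ⟨k, rfl⟩)
  have hcT : ∀ k, c k ∈ T := fun k => .inr ⟨k, rfl⟩
  let zA : Fin l → A := fun k => ⟨z k, hmem _ (hzT k)⟩
  let wA : Fin l → A := fun k => ⟨(z k)⁻¹, hmem _ (hzT' k)⟩
  let cA : Fin l → A := fun k => ⟨c k, hmem _ (hcT k)⟩
  have hzw : ∀ k, zA k * wA k = 1 := fun k => Subtype.ext (mul_inv_cancel₀ (hz k))
  -- A finite extension of `ℚ_[p]` containing the images; being locally compact, it can be used in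
  -- `padic_skolem`, unlike the algebraic closure.
  let E : IntermediateField ℚ_[p] (AlgebraicClosure ℚ_[p]) :=
    IntermediateField.adjoin ℚ_[p] (ψ '' (((↑) : A → F) ⁻¹' T))
  have hE : ∀ a : A, (a : F) ∈ T → ψ a ∈ E := fun a ha =>
    IntermediateField.subset_adjoin _ _ ⟨a, ha, rfl⟩
  have hfinite : Finite (ψ '' (((↑) : A → F) ⁻¹' T)) :=
    ((hTfin.preimage Subtype.val_injective.injOn).image ψ).to_subtype
  have hfd : FiniteDimensional ℚ_[p] E := IntermediateField.finiteDimensional_adjoin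
    fun x _ => Algebra.IsIntegral.isIntegral x
  have : ProperSpace E := FiniteDimensional.proper ℚ_[p] E
  let zE : Fin l → E := fun k => ⟨ψ (zA k), hE _ (hzT k)⟩
  let wE : Fin l → E := fun k => ⟨ψ (wA k), hE _ (hzT' k)⟩
  let cE : Fin l → E := fun k => ⟨ψ (cA k), hE _ (hcT k)⟩
  have hzwE : ∀ k, zE k * wE k = 1 := fun k => Subtype.ext <| by
    simpa using (map_mul ψ (zA k) (wA k)).symm.trans (by rw [hzw, map_one])
  have hnorm : ∀ (a : A) (ha : (a : F) ∈ T), ‖(⟨ψ a, hE a ha⟩ : E)‖ ≤ 1 := fun a ha => by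
    have h := spectralNorm_le_one_of_isIntegral (hint a ha)
    rwa [PadicAlgCl.spectralNorm_eq] at h
  have hzE1 : ∀ k, ‖zE k‖ = 1 := fun k => by
    have h1 : ‖zE k‖ ≤ 1 := hnorm _ (hzT k)
    have h2 : ‖wE k‖ ≤ 1 := hnorm _ (hzT' k)
    have h3 : ‖zE k‖ * ‖wE k‖ = 1 := by rw [← norm_mul, hzwE, norm_one]
    nlinarith [norm_nonneg (zE k), norm_nonneg (wE k)]
  have hψ0 : ∀ m : ℤ, ∑ k, c k * z k ^ m = 0 → ∑ k, cE k * zE k ^ m = 0 := by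
    -- negative powers are positive powers of the inverses, which lie in the ring
    intro m hm
    obtain ⟨n, rfl | rfl⟩ := m.eq_nat_or_neg
    · have h : ∑ k, cA k * zA k ^ n = 0 := Subtype.ext (by simpa [zA, cA] using hm)
      have h' := congrArg ψ h
      apply Subtype.ext
      simpa [zE, cE] using h'
    · have hw : ∀ k, (zE k)⁻¹ = wE k := fun k => inv_eq_of_mul_eq_one_right (hzwE k)
      have h : ∑ k, cA k * wA k ^ n = 0 := Subtype.ext (by simpa [wA, cA] using hm)
      have h' := congrArg ψ h
      simp only [zpow_neg, zpow_natCast, ← inv_pow, hw]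
      apply Subtype.ext
      simpa [wE, cE] using h'
  have hc := padic_skolem p zE cE hzE1 (fun i j hij n hn h => hroot i j hij n hn (by
    have h1 : ψ (zA i ^ n) = ψ (zA j ^ n) := by
      simpa [zE] using congrArg (Subtype.val : E → AlgebraicClosure ℚ_[p]) h
    simpa [zA] using congrArg (Subtype.val : A → F) (hψ h1))) (hS.mono hψ0)
  funext k
  have h1 : ψ (cA k) = ψ 0 := by
    rw [map_zero]
    exact congrArg (Subtype.val : E → AlgebraicClosure ℚ_[p]) (congrFun hc k)
  exact congrArg (Subtype.val : A → F) (hψ h1)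

/-- If G(w) = Σ e^{−2πi r_k w} Q_k(w) vanishes at x₀ + I for infinitely many
integers I, then all Q_k(x₀) = 0. -/
theorem stmt10 (l : ℕ) (r : Fin l → ℝ) (hr : StrictMono r)
    (hirr : ∀ j : Fin l, 1 ≤ (j : ℕ) → Irrational (r j))
    (hdiff : ∀ i j : Fin l, i ≠ j → Irrational (r i - r j))
    (Q : Fin l → ℝ → ℂ)
    (hQ : ∀ k, ∃ (F : Finset ℤ) (a : ℤ → ℂ),
      ∀ w : ℝ, Q k w = ∑ n ∈ F, a n * Complex.exp (-2 * Real.pi * Complex.I * n * w))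
    (x₀ : ℝ)
    (hvanish : {I : ℤ | (∑ k, Complex.exp (-2 * Real.pi * Complex.I * r k * (x₀ + I)) *
      Q k (x₀ + I)) = 0}.Infinite) :
    ∀ k, Q k x₀ = 0 := by
  have hper : ∀ k (m : ℤ), Q k (x₀ + m) = Q k x₀ := fun k m => by
    obtain ⟨F, a, h⟩ := hQ k
    rw [h, h]
    refine Finset.sum_congr rfl fun n _ => ?_
    congr 1
    rw [Complex.exp_eq_exp_iff_exists_int]
    exact ⟨-(n * m), by push_cast; ring⟩
  have hroot : ∀ i j : Fin l, i ≠ j → ∀ n : ℕ, 0 < n →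
      Complex.exp (-2 * Real.pi * Complex.I * r i) ^ n
        ≠ Complex.exp (-2 * Real.pi * Complex.I * r j) ^ n := by
    intro i j hij n hn h
    rw [← Complex.exp_nat_mul, ← Complex.exp_nat_mul, Complex.exp_eq_exp_iff_exists_int] at h
    obtain ⟨q, hq⟩ := h
    have hn0 : (n : ℂ) ≠ 0 := by exact_mod_cast hn.ne'
    have h2 : (n : ℂ) * (r i - r j) = -q := by
      have h3 : (2 * Real.pi * Complex.I : ℂ) * (n * (r i - r j) + q) = 0 := by
        linear_combination -hq
      linear_combination (mul_eq_zero.1 h3).resolve_left Complex.two_pi_I_ne_zero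
    refine hdiff i j hij ⟨-q / n, ?_⟩
    have h4 : ((r i - r j : ℝ) : ℂ) = ((-q / n : ℝ) : ℂ) := by
      push_cast
      rw [eq_div_iff hn0, mul_comm, h2]
    push_cast
    exact (Complex.ofReal_injective h4).symm
  have hc := skolem_mahler_lech (fun k => Complex.exp (-2 * Real.pi * Complex.I * r k))
    (fun k => Complex.exp (-2 * Real.pi * Complex.I * r k * x₀) * Q k x₀)
    (fun k => Complex.exp_ne_zero _) hroot (hvanish.mono fun m hm => by
      rw [Set.mem_ofPred_eq] at hm ⊢
      rw [← hm]
      refine Finset.sum_congr rfl fun k _ => ?_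
      rw [hper, ← Complex.exp_int_mul, mul_right_comm, ← Complex.exp_add]
      congr 2
      ring)
  exact fun k => (mul_eq_zero.1 (congrFun hc k)).resolve_left (Complex.exp_ne_zero _)
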